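/- arXiv:2410.18669 — 3 statements merged into one kernel-verified Lean document; each statement's English description precedes it below -/
import Mathlib

section
/- (Lemma 1) Let N ≥ 1, let λ₁, …, λ_N ∈ ℝ² be unit vectors, and let G ∈ ℝ^{N×2N} be the block-diagonal matrix whose i-th diagonal block is the row vector λ̄ᵢᵀ. Let (k_{ij}) for i, j ∈ {1,…,N,*} be a symmetric positive semidefinite (N+1)×(N+1) real matrix with k_{**} > 0; let K ∈ ℝ^{2N×2N} be the block matrix whose (i,j) block is k_{ij}I₂ and K* ∈ ℝ^{2N×2} the block matrix whose i-th block is k_{i*}I₂, and let σ > 0. Then the matrix Ω_yy = G(K + σ²I_{2N})Gᵀ is positive definite (hence invertible), and the posterior covariance matrix Σ = k_{**}I₂ − K*ᵀGᵀ Ω_yy⁻¹ G K* is positive definite. -/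
open Matrix

/-- The rotation-and-scaling matrix `R` with first row `(0, √2)` and second row `(−√2, 0)`. -/
noncomputable def Rmat : Matrix (Fin 2) (Fin 2) ℝ :=
  !![0, Real.sqrt 2; -Real.sqrt 2, 0]

/-- `λ̄ = R λ`. -/
noncomputable def bearingBar (l : Fin 2 → ℝ) : Fin 2 → ℝ := Rmat.mulVec l

/-- The block-diagonal bearing data matrix `G ∈ ℝ^{N×2N}` whose `i`-th diagonal block is the
row vector `λ̄ᵢᵀ`.  Columns are indexed by `Fin N × Fin 2`. -/
noncomputable def Gmat {N : ℕ} (lam : Fin N → Fin 2 → ℝ) :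
    Matrix (Fin N) (Fin N × Fin 2) ℝ :=
  fun i jl => if i = jl.1 then bearingBar (lam jl.1) jl.2 else 0

/-- The `2N × 2N` kernel Gram matrix whose `(i,j)` block is `k_{ij} I₂`.
Indices `some i` refer to sampling times and `none` to the prediction time. -/
def Kmat {N : ℕ} (k : Matrix (Option (Fin N)) (Option (Fin N)) ℝ) :
    Matrix (Fin N × Fin 2) (Fin N × Fin 2) ℝ :=
  fun il jm => k (some il.1) (some jm.1) * (1 : Matrix (Fin 2) (Fin 2) ℝ) il.2 jm.2

/-- The `2N × 2` kernel matrix `K*` whose `i`-th block is `k_{i*} I₂`. -/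
def KstarMat {N : ℕ} (k : Matrix (Option (Fin N)) (Option (Fin N)) ℝ) :
    Matrix (Fin N × Fin 2) (Fin 2) ℝ :=
  fun il m => k (some il.1) none * (1 : Matrix (Fin 2) (Fin 2) ℝ) il.2 m

/-!
Let `Ω = G (A + S) Gᴴ` be the covariance of the measurements `G z + noise` of a prior with block
covariance `(A, B; Bᴴ, D)`.  The posterior covariance is the Schur complement of `Ω` in the joint
covariance `(Ω, G B; Bᴴ Gᴴ, D)` of measurements and prediction, which is the positive semidefinite
compression `(G A Gᴴ, G B; Bᴴ Gᴴ, D)` of the prior plus the measurement noise `G S Gᴴ` in the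
first corner.  The noise makes the joint form positive wherever the measurement component is
nonzero, and elsewhere the form reduces to that of `D`.  For the bearing problem, the prior
`(K, K*; K*ᵀ, k_{**} I₂)` is a reindexing of `k ⊗ I₂`, and `Gᵀ` is injective because `λ̄ᵢ ≠ 0`.
-/

section PosDefFromBlocks

variable {m n o α : Type*} [Finite n]
  [Ring α] [PartialOrder α] [StarRing α] {A : Matrix m m α} {B : Matrix m n α} {D : Matrix n n α}

theorem posDef_fromBlocks_add_of_posSemidef [Finite m] [AddLeftMono α] {S : Matrix m m α}
    (h : (fromBlocks A B Bᴴ D).PosSemidef) (hS : S.PosDef) (hD : D.PosDef) :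
    (fromBlocks (A + S) B Bᴴ D).PosDef := by
  cases nonempty_fintype m
  cases nonempty_fintype n
  have hsplit : fromBlocks (A + S) B Bᴴ D = fromBlocks A B Bᴴ D + fromBlocks S 0 0 0 := by
    simp only [fromBlocks_add, add_zero]
  have hherm : (fromBlocks S 0 0 (0 : Matrix n n α)).IsHermitian :=
    hS.1.fromBlocks conjTranspose_zero isHermitian_zero
  refine .of_dotProduct_mulVec_pos (hsplit ▸ h.1.add hherm) fun z hz => ?_
  obtain ⟨x, y, rfl⟩ : ∃ x y, z = Sum.elim x y := ⟨_, _, (Sum.elim_comp_inl_inr z).symm⟩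
  by_cases hx : x = 0
  · subst hx
    have hy : y ≠ 0 := by
      rintro rfl
      exact hz Sum.elim_zero_zero
    simpa [fromBlocks_mulVec, Function.star_sumElim] using hD.dotProduct_mulVec_pos hy
  · rw [hsplit, add_mulVec, dotProduct_add]
    refine add_pos_of_nonneg_of_pos (h.dotProduct_mulVec_nonneg _) ?_
    simpa [fromBlocks_mulVec, Function.star_sumElim] using hS.dotProduct_mulVec_pos hx

theorem posSemidef_fromBlocks_mul_mul_conjTranspose [Fintype m] [Finite o]
    (h : (fromBlocks A B Bᴴ D).PosSemidef) (G : Matrix o m α) :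
    (fromBlocks (G * A * Gᴴ) (G * B) (G * B)ᴴ D).PosSemidef := by
  classical
  cases nonempty_fintype n
  cases nonempty_fintype o
  simpa [fromBlocks_conjTranspose, fromBlocks_multiply, conjTranspose_mul] using
    h.mul_mul_conjTranspose_same (fromBlocks G 0 0 (1 : Matrix n n α))

end PosDefFromBlocks

section SchurComplement

variable {m n o F : Type*} [Fintype m] [Finite n] [Field F] [PartialOrder F] [StarRing F]
  {A : Matrix m m F} {B : Matrix m n F} {D : Matrix n n F}

theorem posDef_schurComplement_of_posDef_fromBlocks [DecidableEq m]
    (h : (fromBlocks A B Bᴴ D).PosDef) : (D - Bᴴ * A⁻¹ * B).PosDef := by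
  cases nonempty_fintype n
  have hA : A.PosDef := h.submatrix Sum.inl_injective
  let := hA.isUnit.invertible
  refine .of_dotProduct_mulVec_pos ((IsHermitian.fromBlocks₁₁ B D hA.1).mp h.1) fun y hy => ?_
  -- For fixed `y`, the block form is minimised at `x = -A⁻¹ B y`, with the Schur form as value.
  have hxy : Sum.elim (-((A⁻¹ * B) *ᵥ y)) y ≠ 0 := fun h0 => hy (congrArg (· ∘ Sum.inr) h0)
  have hpos := h.dotProduct_mulVec_pos hxy
  rwa [dotProduct_mulVec, schur_complement_eq₁₁ B D _ _ hA.1, neg_add_cancel, dotProduct_zero,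
    zero_add, ← dotProduct_mulVec] at hpos

theorem posterior_covariance_posDef_general [AddLeftMono F] [Fintype o] [DecidableEq o]
    {S : Matrix m m F} {G : Matrix o m F} (hprior : (fromBlocks A B Bᴴ D).PosSemidef)
    (hD : D.PosDef) (hS : S.PosDef) (hG : Function.Injective G.vecMul) :
    (G * (A + S) * Gᴴ).PosDef ∧
      (D - Bᴴ * Gᴴ * (G * (A + S) * Gᴴ)⁻¹ * G * B).PosDef := by
  have hjoint : (fromBlocks (G * (A + S) * Gᴴ) (G * B) (G * B)ᴴ D).PosDef := by
    simpa only [Matrix.mul_add, Matrix.add_mul] using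
      posDef_fromBlocks_add_of_posSemidef (posSemidef_fromBlocks_mul_mul_conjTranspose hprior G)
        (hS.mul_mul_conjTranspose_same hG) hD
  refine ⟨hjoint.submatrix Sum.inl_injective, ?_⟩
  simpa only [conjTranspose_mul, Matrix.mul_assoc] using
    posDef_schurComplement_of_posDef_fromBlocks hjoint

end SchurComplement

section Bearing

variable {N : ℕ}

open scoped Kronecker in
theorem posSemidef_fromBlocks_Kmat_KstarMat {k : Matrix (Option (Fin N)) (Option (Fin N)) ℝ}
    (hk : k.PosSemidef) :
    (fromBlocks (Kmat k) (KstarMat k) (KstarMat k)ᴴ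
      (k none none • (1 : Matrix (Fin 2) (Fin 2) ℝ))).PosSemidef := by
  have hkron : fromBlocks (Kmat k) (KstarMat k) (KstarMat k)ᴴ (k none none • 1) =
      (k ⊗ₖ (1 : Matrix (Fin 2) (Fin 2) ℝ)).submatrix
        (Sum.elim (Prod.map some id) (Prod.mk none))
        (Sum.elim (Prod.map some id) (Prod.mk none)) := by
    have hsymm (i) : k (some i) none = k none (some i) := hk.1.apply none (some i)
    ext (_ | _) (_ | _) <;> simp [Kmat, KstarMat, hsymm, one_apply, eq_comm]
  exact hkron ▸ (hk.kronecker .one).submatrix _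

theorem bearingBar_ne_zero {l : Fin 2 → ℝ} (hl : l ≠ 0) : bearingBar l ≠ 0 := by
  contrapose! hl
  have h₁ : l 1 = 0 := by simpa [bearingBar, Rmat, mulVec, dotProduct] using congrFun hl 0
  have h₀ : l 0 = 0 := by simpa [bearingBar, Rmat, mulVec, dotProduct] using congrFun hl 1
  ext i
  fin_cases i
  exacts [h₀, h₁]

theorem vecMul_Gmat_apply (lam : Fin N → Fin 2 → ℝ) (v : Fin N → ℝ) (i : Fin N) (j : Fin 2) :
    (v ᵥ* Gmat lam) (i, j) = v i * bearingBar (lam i) j := by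
  simp [vecMul, dotProduct, Gmat]

theorem vecMul_Gmat_injective {lam : Fin N → Fin 2 → ℝ} (hlam : ∀ i, lam i ≠ 0) :
    Function.Injective (Gmat lam).vecMul := by
  intro v w hvw
  ext i
  obtain ⟨j, hj⟩ := Function.ne_iff.mp (bearingBar_ne_zero (hlam i))
  exact mul_right_cancel₀ hj (by simpa only [vecMul_Gmat_apply] using congrFun hvw (i, j))

end Bearing

theorem posterior_covariance_posDef {N : ℕ} (hN : 1 ≤ N)
    (lam : Fin N → Fin 2 → ℝ) (hlam : ∀ i, lam i 0 ^ 2 + lam i 1 ^ 2 = 1)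
    (k : Matrix (Option (Fin N)) (Option (Fin N)) ℝ)
    (hk : k.PosSemidef) (hkstar : 0 < k none none) (σ : ℝ) (hσ : 0 < σ) :
    (Gmat lam * (Kmat k + σ ^ 2 • (1 : Matrix (Fin N × Fin 2) (Fin N × Fin 2) ℝ))
        * (Gmat lam)ᵀ).PosDef ∧
    (k none none • (1 : Matrix (Fin 2) (Fin 2) ℝ)
      - (KstarMat k)ᵀ * (Gmat lam)ᵀ
        * (Gmat lam * (Kmat k + σ ^ 2 • (1 : Matrix (Fin N × Fin 2) (Fin N × Fin 2) ℝ))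
            * (Gmat lam)ᵀ)⁻¹
        * Gmat lam * KstarMat k).PosDef := by
  have hlam_ne (i) : lam i ≠ 0 := fun h => by simpa [h] using hlam i
  simpa only [conjTranspose_eq_transpose_of_trivial] using
    posterior_covariance_posDef_general (posSemidef_fromBlocks_Kmat_KstarMat hk)
      (PosDef.one.smul hkstar) (PosDef.one.smul (pow_pos hσ 2)) (vecMul_Gmat_injective hlam_ne)
end

section
/- Let N ≥ 1, let λ₁, …, λ_N ∈ ℝ² be unit vectors, let G ∈ ℝ^{N×2N} be the block-diagonal matrix whose i-th diagonal block is the row vector λ̄ᵢᵀ, let (k_{ij})_{i,j=1}^N be a symmetric positive semidefinite real matrix with k_{ii} > 0 for all i, and let K ∈ ℝ^{2N×2N} be the block matrix whose (i,j) block is k_{ij}I₂. Then ‖G K Gᵀ‖ ≤ (max_{1≤i≤N} k_{ii}) · λ_max(P), where P = Σ_{i=1}^N (2I₂ − 2λᵢλᵢᵀ) is the cumulative bearing matrix, λ_max(P) its largest eigenvalue, and ‖·‖ the spectral norm. -/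
open Matrix

/-- The cumulative bearing matrix `P = Σᵢ (2I₂ − 2λᵢλᵢᵀ)`. -/
def cumBearing {N : ℕ} (lam : Fin N → Fin 2 → ℝ) : Matrix (Fin 2) (Fin 2) ℝ :=
  ∑ i : Fin N, ((2 : ℝ) • (1 : Matrix (Fin 2) (Fin 2) ℝ)
    - (2 : ℝ) • vecMulVec (lam i) (lam i))

/-- The spectral norm of a real square matrix, i.e. the operator norm of the induced
continuous linear endomorphism of Euclidean space. -/
noncomputable def specNorm {n : Type*} [Fintype n] [DecidableEq n]
    (A : Matrix n n ℝ) : ℝ :=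
  ‖Matrix.toEuclideanCLM (𝕜 := ℝ) (n := n) A‖

/-- The largest eigenvalue of a Hermitian (real symmetric) matrix. -/
noncomputable def lamMax {n : Type*} [Fintype n] [DecidableEq n] [Nonempty n]
    {A : Matrix n n ℝ} (hA : A.IsHermitian) : ℝ :=
  ⨆ i, hA.eigenvalues i

/-!
The block structure collapses to a Hadamard product: `G K Gᵀ = k ⊙ (B Bᵀ)`, where `B` is the
`N × 2` matrix with rows `λ̄ᵢᵀ`. Since `B Bᵀ ≤ ‖B Bᵀ‖ • 1` and both factors are positive
semidefinite, the Schur product theorem gives `0 ≤ k ⊙ (B Bᵀ) ≤ ‖B Bᵀ‖ • diag k`, hence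
`‖G K Gᵀ‖ ≤ (max kᵢᵢ) ‖B Bᵀ‖`. Finally `‖B Bᵀ‖ = ‖Bᵀ B‖`, and `Bᵀ B = P` because
`λ̄ λ̄ᵀ = 2 (I - λ λᵀ)` for a unit vector `λ` of the plane.
-/

open scoped ComplexOrder MatrixOrder Matrix.Norms.L2Operator Kronecker

section IsometricFunctionalCalculus

variable {A : Type*} [NormedRing A] [StarRing A] [NormedAlgebra ℝ A] [PartialOrder A]
  [StarOrderedRing A] [NonnegSpectrumClass ℝ A]
  [IsometricContinuousFunctionalCalculus ℝ A IsSelfAdjoint] {a b : A}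

lemma norm_le_iff_le_algebraMap_of_nonneg (ha : 0 ≤ a) {r : ℝ} (hr : 0 ≤ r) :
    ‖a‖ ≤ r ↔ a ≤ algebraMap ℝ A r := by
  have hsa : IsSelfAdjoint a := .of_nonneg ha
  rw [le_algebraMap_iff_spectrum_le]
  conv_lhs => rw [← cfc_id ℝ a, norm_cfc_le_iff id a hr]
  refine forall₂_congr fun x hx => ?_
  rw [id, Real.norm_of_nonneg (spectrum_nonneg_of_nonneg ha hx)]

lemma norm_le_norm_of_nonneg_of_le (ha : 0 ≤ a) (hab : a ≤ b) : ‖a‖ ≤ ‖b‖ := by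
  have hb : b ≤ algebraMap ℝ A ‖b‖ :=
    (norm_le_iff_le_algebraMap_of_nonneg (ha.trans hab) (norm_nonneg b)).1 le_rfl
  exact (norm_le_iff_le_algebraMap_of_nonneg ha (norm_nonneg b)).2 (hab.trans hb)

end IsometricFunctionalCalculus

section Schur

variable {n 𝕜 : Type*} [RCLike 𝕜]

lemma hadamard_le_hadamard_of_posSemidef_left {A B C : Matrix n n 𝕜} (hA : A.PosSemidef)
    (hBC : B ≤ C) : A ⊙ B ≤ A ⊙ C := by
  have hsub : A ⊙ C - A ⊙ B = A ⊙ (C - B) := by ext; simp [mul_sub]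
  rw [le_iff, hsub]
  exact hA.hadamard hBC

variable [Fintype n] [DecidableEq n]

lemma norm_hadamard_le_of_posSemidef {A B : Matrix n n 𝕜} (hA : A.PosSemidef)
    (hB : B.PosSemidef) : ‖A ⊙ B‖ ≤ ‖A.diag‖ * ‖B‖ := by
  -- The library instance is over `𝕜`, but the functional calculus used here is over `ℝ`.
  let : NormedAlgebra ℝ (Matrix n n 𝕜) :=
    { norm_smul_le r M := by
        rw [RCLike.real_smul_eq_coe_smul (K := 𝕜), norm_smul, RCLike.norm_ofReal,
          Real.norm_eq_abs] }
  have hB_le : B ≤ (‖B‖ : 𝕜) • 1 := by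
    simpa [Algebra.algebraMap_eq_smul_one] using
      (norm_le_iff_le_algebraMap_of_nonneg hB.nonneg (norm_nonneg B)).1 le_rfl
  have hAB_le : A ⊙ B ≤ (‖B‖ : 𝕜) • diagonal A.diag := by
    simpa [hadamard_smul, hadamard_one] using hadamard_le_hadamard_of_posSemidef_left hA hB_le
  calc ‖A ⊙ B‖ ≤ ‖(‖B‖ : 𝕜) • diagonal A.diag‖ :=
        norm_le_norm_of_nonneg_of_le (hA.hadamard hB).nonneg hAB_le
    _ = ‖A.diag‖ * ‖B‖ := by
        rw [norm_smul, RCLike.norm_ofReal, abs_norm, l2_opNorm_diagonal, mul_comm]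

end Schur

section SpecNorm

variable {m n : Type*} [Fintype m] [DecidableEq m] [Fintype n] [DecidableEq n]

lemma specNorm_eq_lamMax_of_posSemidef [Nonempty n] {A : Matrix n n ℝ} (hA : A.PosSemidef) :
    specNorm A = lamMax hA.isHermitian := by
  have hH := hA.isHermitian
  have hgreatest : IsGreatest (Set.range hH.eigenvalues) (specNorm A) := by
    have himage : (‖·‖) '' Set.range hH.eigenvalues = Set.range hH.eigenvalues := by
      rw [← Set.range_comp]
      exact congrArg Set.range (funext fun i => Real.norm_of_nonneg (hA.eigenvalues_nonneg i))
    rw [← himage, ← hH.spectrum_real_eq_range_eigenvalues]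
    exact IsometricContinuousFunctionalCalculus.isGreatest_norm_spectrum A hH.isSelfAdjoint
  exact hgreatest.csSup_eq.symm

lemma specNorm_mul_transpose_self (B : Matrix m n ℝ) : specNorm (B * Bᵀ) = specNorm (Bᵀ * B) := by
  simp only [specNorm, ← cstar_norm_def, ← conjTranspose_eq_transpose_of_trivial]
  rw [l2_opNorm_conjTranspose_mul_self]
  have hnorm := l2_opNorm_conjTranspose_mul_self Bᴴ
  rwa [conjTranspose_conjTranspose, l2_opNorm_conjTranspose] at hnorm

end SpecNorm

section Bearing

variable {N : ℕ} (lam : Fin N → Fin 2 → ℝ)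

/-- The `N × 2` matrix whose `i`-th row is `λ̄ᵢᵀ`: the diagonal blocks of `Gmat lam` stacked on top
of each other. -/
noncomputable def barMatrix : Matrix (Fin N) (Fin 2) ℝ :=
  of fun i => bearingBar (lam i)

lemma Gmat_mul_kronecker_mul_transpose (k : Matrix (Fin N) (Fin N) ℝ)
    (M : Matrix (Fin 2) (Fin 2) ℝ) :
    Gmat lam * (k ⊗ₖ M) * (Gmat lam)ᵀ = k ⊙ (barMatrix lam * M * (barMatrix lam)ᵀ) := by
  ext i j
  simp only [mul_apply, Gmat, barMatrix, of_apply, transpose_apply, kroneckerMap_apply,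
    hadamard_apply, Fintype.sum_prod_type, Fin.sum_univ_two, ite_mul, mul_ite, zero_mul, mul_zero,
    Finset.sum_ite_irrel, Finset.sum_const_zero, Finset.sum_ite_eq, Finset.mem_univ, if_true]
  ring

lemma bearingBar_eq_smul (l : Fin 2 → ℝ) : bearingBar l = √2 • ![l 1, -l 0] := by
  ext a
  fin_cases a <;> simp [bearingBar, Rmat, mulVec, dotProduct]

lemma vecMulVec_bearingBar_self (l : Fin 2 → ℝ) :
    vecMulVec (bearingBar l) (bearingBar l) = (2 : ℝ) • ((l ⬝ᵥ l) • 1 - vecMulVec l l) := by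
  rw [bearingBar_eq_smul, smul_vecMulVec, vecMulVec_smul, smul_smul,
    Real.mul_self_sqrt zero_le_two]
  congr 1
  ext a b
  fin_cases a <;> fin_cases b <;> simp [vecMulVec_apply, dotProduct] <;> ring

lemma cumBearing_eq_transpose_mul_barMatrix (hlam : ∀ i, lam i 0 ^ 2 + lam i 1 ^ 2 = 1) :
    cumBearing lam = (barMatrix lam)ᵀ * barMatrix lam := by
  have hterm (i : Fin N) : (2 : ℝ) • (1 : Matrix (Fin 2) (Fin 2) ℝ)
      - (2 : ℝ) • vecMulVec (lam i) (lam i)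
      = vecMulVec (bearingBar (lam i)) (bearingBar (lam i)) := by
    have hunit : lam i ⬝ᵥ lam i = 1 := by
      rw [dotProduct, Fin.sum_univ_two, ← sq, ← sq, hlam]
    rw [vecMulVec_bearingBar_self, hunit, one_smul, smul_sub]
  ext a b
  simp only [cumBearing, hterm, Matrix.sum_apply, vecMulVec_apply, mul_apply, transpose_apply,
    barMatrix, of_apply]

end Bearing

theorem spectral_norm_GKG_bound {N : ℕ} (hN : 1 ≤ N)
    (lam : Fin N → Fin 2 → ℝ) (hlam : ∀ i, lam i 0 ^ 2 + lam i 1 ^ 2 = 1)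
    (k : Matrix (Fin N) (Fin N) ℝ) (hk : k.PosSemidef) (hkd : ∀ i, 0 < k i i)
    (K : Matrix (Fin N × Fin 2) (Fin N × Fin 2) ℝ)
    (hK : K = fun il jm => k il.1 jm.1 * (1 : Matrix (Fin 2) (Fin 2) ℝ) il.2 jm.2) :
    ∀ hP : (cumBearing lam).IsHermitian,
      specNorm (Gmat lam * K * (Gmat lam)ᵀ) ≤
        (Finset.univ.sup'
            (Finset.univ_nonempty_iff.mpr (Fin.pos_iff_nonempty.mp hN))
            fun i => k i i) * lamMax hP := by
  intro hP
  set B := barMatrix lam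
  set κ := Finset.univ.sup' _ fun i => k i i
  have hcum : cumBearing lam = Bᵀ * B := cumBearing_eq_transpose_mul_barMatrix lam hlam
  have hcumPos : (cumBearing lam).PosSemidef := hcum ▸ posSemidef_conjTranspose_mul_self B
  have hdiag : ‖k.diag‖ ≤ κ := by
    have hle (i) : k i i ≤ κ := Finset.le_sup' (fun i => k i i) (Finset.mem_univ i)
    refine (pi_norm_le_iff_of_nonneg ((hkd ⟨0, hN⟩).le.trans (hle _))).2 fun i => ?_
    rw [diag_apply, Real.norm_of_nonneg (hkd i).le]
    exact hle i
  calc specNorm (Gmat lam * K * (Gmat lam)ᵀ) = specNorm (k ⊙ (B * Bᵀ)) := by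
        rw [show K = k ⊗ₖ 1 from hK, Gmat_mul_kronecker_mul_transpose, Matrix.mul_one]
    _ ≤ ‖k.diag‖ * specNorm (B * Bᵀ) :=
        norm_hadamard_le_of_posSemidef hk (posSemidef_self_mul_conjTranspose B)
    _ ≤ κ * specNorm (B * Bᵀ) := mul_le_mul_of_nonneg_right hdiag (norm_nonneg _)
    _ = κ * specNorm (cumBearing lam) := by rw [specNorm_mul_transpose_self, hcum]
    _ = κ * lamMax hP := by rw [specNorm_eq_lamMax_of_posSemidef hcumPos]
end

section
/- Let N ≥ 1, let λ₁, …, λ_N ∈ ℝ² be unit vectors, let G ∈ ℝ^{N×2N} be the block-diagonal matrix whose i-th diagonal block is the row vector λ̄ᵢᵀ, and suppose the cumulative bearing matrix P = Σ_{i=1}^N (2I₂ − 2λᵢλᵢᵀ) is positive definite. Let (k_{ij}) for i,j ∈ {1,…,N,*} be a symmetric positive semidefinite (N+1)×(N+1) real matrix with k_{ii} > 0 for all i and k_{**} > 0; let K ∈ ℝ^{2N×2N} have (i,j) block k_{ij}I₂, let K* ∈ ℝ^{2N×2} have i-th block k_{i*}I₂, and let σ > 0. Then the posterior covariance Σ =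 k_{**}I₂ − K*ᵀGᵀ(G(K + σ²I_{2N})Gᵀ)⁻¹GK* satisfies ‖Σ‖ ≤ 2k_{**}σ²/(N·k̄) + ξ/k̄, where k̄ = max_{1≤i≤N} k_{ii}, ξ = k_{**}·k̄ − (min_{1≤i≤N} k_{i*}²)/cond(P), and cond(P) = λ_max(P)/λ_min(P) is the condition number of P. -/
open Matrix

/-- The condition number `λ_max / λ_min` of a Hermitian (real symmetric) matrix. -/
noncomputable def condNum {n : Type*} [Fintype n] [DecidableEq n] [Nonempty n]
    {A : Matrix n n ℝ} (hA : A.IsHermitian) : ℝ :=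
  (⨆ i, hA.eigenvalues i) / (⨅ i, hA.eigenvalues i)

/-!
Since `λ̄ᵢλ̄ᵢᵀ = 2I - 2λᵢλᵢᵀ`, the cumulative bearing matrix is `P = UᵀU`, where `U` has rows
`λ̄ᵢᵀ`. The measurement covariance `S = G(K + σ²I)Gᵀ` equals `(k_{ij}) ⊙ UUᵀ + 2σ²I`, and `UUᵀ` has
no eigenvalue above `λ_max(UᵀU)`, so `S ≤ (k̄ λ_max(P) + 2σ²)I` by the Schur product theorem. On the
other side, `GK* = diag(k_{i*})U`, so `(GK*)ᵀGK* ≥ (min k_{i*}²) λ_min(P) I`. Inverting the bound on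
`S` gives `Σ ≤ (k_{**} - (min k_{i*}²) λ_min(P) / (k̄ λ_max(P) + 2σ²))I`, and `Σ ≥ 0` because it is
a Schur complement of a joint covariance matrix. Finally, dropping `2σ²` from the denominator costs
at most `2k_{**}σ² / (N k̄)`, because `min k_{i*}² ≤ k_{**}k̄` and `tr P = 2N` forces
`λ_max(P) ≥ N`.
-/

open scoped ComplexOrder Kronecker MatrixOrder

section LoewnerOrder

variable {m n p 𝕜 : Type*} [RCLike 𝕜]

lemma sq_apply_le_mul_of_posSemidef {A : Matrix n n ℝ} (hA : A.PosSemidef) (i j : n) :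
    A i j ^ 2 ≤ A i i * A j j := by
  have hdet := (hA.submatrix ![i, j]).det_nonneg
  have hsymm : A j i = A i j := hA.1.apply i j
  simp only [det_fin_two, submatrix_apply, cons_val_zero, cons_val_one, hsymm] at hdet
  linarith

lemma conjTranspose_mul_mul_le_conjTranspose_mul_mul [Fintype m] [Finite n] {A B : Matrix m m 𝕜}
    (h : A ≤ B) (X : Matrix m n 𝕜) : Xᴴ * A * X ≤ Xᴴ * B * X := by
  simpa only [le_iff, Matrix.mul_sub, Matrix.sub_mul] using
    PosSemidef.conjTranspose_mul_mul_same h X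

lemma hadamard_le_hadamard_left {A B C : Matrix n n 𝕜} (hC : C.PosSemidef) (h : A ≤ B) :
    C ⊙ A ≤ C ⊙ B := by
  have hsub : C ⊙ (B - A) = C ⊙ B - C ⊙ A := by
    ext
    simp [mul_sub]
  simpa only [le_iff, hsub] using hC.hadamard h

lemma diagonal_le_diagonal [DecidableEq n] {d e : n → 𝕜} (h : d ≤ e) :
    diagonal d ≤ diagonal e := by
  rw [le_iff, diagonal_sub]
  exact .diagonal (sub_nonneg.2 h)

lemma hadamard_le_mul_smul_one [Finite n] [DecidableEq n] {A B : Matrix n n ℝ} {r s : ℝ}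
    (hA : A.PosSemidef) (hdiag : ∀ i, A i i ≤ r) (hs : 0 ≤ s) (hB : B ≤ s • 1) :
    A ⊙ B ≤ (r * s) • 1 := by
  have := Fintype.ofFinite n
  calc A ⊙ B ≤ A ⊙ (s • 1) := hadamard_le_hadamard_left hA hB
    _ = s • diagonal A.diag := by rw [hadamard_smul, hadamard_one]
    _ ≤ s • diagonal fun _ => r := smul_le_smul_of_nonneg_left (diagonal_le_diagonal hdiag) hs
    _ = (r * s) • 1 := by rw [← smul_one_eq_diagonal, smul_smul, mul_comm]

variable [Fintype n] [DecidableEq n]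

-- Both inequalities are Schur complement conditions for the block matrix `[[B, 1], [1, A⁻¹]]`.
lemma inv_le_inv_of_posDef_of_le {A B : Matrix n n 𝕜} (hA : A.PosDef) (h : A ≤ B) :
    B⁻¹ ≤ A⁻¹ := by
  have hB : B.PosDef := by simpa using hA.add_posSemidef h
  have : Invertible A := hA.isUnit.invertible
  have : Invertible B := hB.isUnit.invertible
  have : Invertible A⁻¹ := hA.inv.isUnit.invertible
  have hblock : (fromBlocks B 1 1ᴴ A⁻¹).PosSemidef := by
    rw [PosDef.fromBlocks₂₂ B 1 hA.inv]
    simpa [le_iff] using h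
  rw [PosDef.fromBlocks₁₁ 1 A⁻¹ hB] at hblock
  simpa [le_iff] using hblock

lemma inv_smul_one_le_inv {A : Matrix n n ℝ} {r : ℝ} (hA : A.PosDef) (hr : 0 < r)
    (h : A ≤ r • 1) : r⁻¹ • 1 ≤ A⁻¹ := by
  have := invertibleOfNonzero hr.ne'
  simpa [Matrix.inv_smul] using inv_le_inv_of_posDef_of_le hA h

lemma mul_conjTranspose_le_smul_one [Fintype m] [DecidableEq m] {U : Matrix m n 𝕜} {r : ℝ}
    (hr : 0 < r) (h : Uᴴ * U ≤ r • 1) : U * Uᴴ ≤ r • 1 := by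
  set W : Matrix m m 𝕜 := r • 1 - U * Uᴴ with hW
  have hWstar : Wᴴ = W := by simp [hW]
  have hid : W = r⁻¹ • (Wᴴ * W + U * (r • 1 - Uᴴ * U) * Uᴴ) := by
    rw [hWstar, eq_inv_smul_iff₀ hr.ne', hW]
    simp only [Matrix.mul_sub, Matrix.sub_mul, Matrix.mul_smul, Matrix.smul_mul, Matrix.mul_one,
      Matrix.one_mul, Matrix.mul_assoc, smul_sub]
    abel
  rw [le_iff, ← hW, hid]
  exact ((posSemidef_conjTranspose_mul_self W).add (h.mul_mul_conjTranspose_same U)).smul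
    (inv_nonneg.2 hr.le)

lemma posSemidef_sub_conjTranspose_mul_inv_mul [Fintype m] [Finite p] {A : Matrix m m 𝕜}
    {B : Matrix m p 𝕜} {D : Matrix p p 𝕜} (h : (fromBlocks A B Bᴴ D).PosSemidef)
    (G : Matrix n m 𝕜) (hG : (G * A * Gᴴ).PosDef) :
    (D - (G * B)ᴴ * (G * A * Gᴴ)⁻¹ * (G * B)).PosSemidef := by
  classical
  have := Fintype.ofFinite p
  have : Invertible (G * A * Gᴴ) := hG.isUnit.invertible
  rw [← PosDef.fromBlocks₁₁ (G * B) D hG]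
  simpa [fromBlocks_multiply, fromBlocks_conjTranspose, conjTranspose_mul] using
    h.mul_mul_conjTranspose_same (fromBlocks G 0 0 (1 : Matrix p p 𝕜))

end LoewnerOrder

section Eigenvalues

variable {n 𝕜 : Type*} [RCLike 𝕜] [Fintype n] [DecidableEq n] {A : Matrix n n 𝕜}

lemma le_iSup_eigenvalues_smul_one (hA : A.IsHermitian) : A ≤ (⨆ i, hA.eigenvalues i) • 1 := by
  rw [← Algebra.algebraMap_eq_smul_one, le_algebraMap_iff_spectrum_le (ha := hA),
    hA.spectrum_real_eq_range_eigenvalues, Set.forall_mem_range]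
  exact le_ciSup (Set.finite_range _).bddAbove

lemma iInf_eigenvalues_smul_one_le (hA : A.IsHermitian) : (⨅ i, hA.eigenvalues i) • 1 ≤ A := by
  rw [← Algebra.algebraMap_eq_smul_one, algebraMap_le_iff_le_spectrum (ha := hA),
    hA.spectrum_real_eq_range_eigenvalues, Set.forall_mem_range]
  exact ciInf_le (Set.finite_range _).bddBelow

lemma iInf_eigenvalues_pos [Nonempty n] (hA : A.PosDef) : 0 < ⨅ i, hA.1.eigenvalues i := by
  obtain ⟨i, hi⟩ := exists_eq_ciInf_of_finite (f := hA.1.eigenvalues)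
  exact hi ▸ hA.eigenvalues_pos i

lemma trace_le_card_mul_iSup_eigenvalues {A : Matrix n n ℝ} (hA : A.IsHermitian) :
    A.trace ≤ Fintype.card n * ⨆ i, hA.eigenvalues i := by
  rw [hA.trace_eq_sum_eigenvalues, ← nsmul_eq_mul]
  exact Finset.sum_le_card_nsmul _ _ _ fun i _ =>
    le_ciSup (f := hA.eigenvalues) (Set.finite_range _).bddAbove i

open scoped Matrix.Norms.L2Operator in
lemma specNorm_le_of_nonneg_of_le_smul_one [Nonempty n] {A : Matrix n n ℝ} {r : ℝ} (h0 : 0 ≤ A)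
    (h : A ≤ r • 1) : specNorm A ≤ r := by
  have hA : IsSelfAdjoint A := .of_nonneg h0
  obtain ⟨x, hx, hxA⟩ :=
    (IsometricContinuousFunctionalCalculus.isGreatest_norm_spectrum (𝕜 := ℝ) A).1
  have hxr : x ≤ r := by
    rw [← Algebra.algebraMap_eq_smul_one, le_algebraMap_iff_spectrum_le] at h
    exact h x hx
  calc specNorm A = ‖x‖ := hxA.symm
    _ = x := Real.norm_of_nonneg (spectrum_nonneg_of_nonneg h0 hx)
    _ ≤ r := hxr

end Eigenvalues

section Bearing

variable {N : ℕ} {lam : Fin N → Fin 2 → ℝ} {k : Matrix (Option (Fin N)) (Option (Fin N)) ℝ} {σ : ℝ}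

/-- The `N × 2` matrix with rows `λ̄ᵢᵀ`: the blocks of `Gmat lam`, stacked. -/
noncomputable def bearingRows (lam : Fin N → Fin 2 → ℝ) : Matrix (Fin N) (Fin 2) ℝ :=
  of fun i => bearingBar (lam i)

/-- The covariance `G(K + σ²I)Gᵀ` of the pseudo linear bearing measurements. -/
noncomputable def measurementCov (lam : Fin N → Fin 2 → ℝ)
    (k : Matrix (Option (Fin N)) (Option (Fin N)) ℝ) (σ : ℝ) : Matrix (Fin N) (Fin N) ℝ :=
  Gmat lam * (Kmat k + σ ^ 2 • (1 : Matrix (Fin N × Fin 2) (Fin N × Fin 2) ℝ)) * (Gmat lam)ᵀ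

/-- The Gaussian-process posterior covariance `Σ` of the target position at `t*`. -/
noncomputable def posteriorCov (lam : Fin N → Fin 2 → ℝ)
    (k : Matrix (Option (Fin N)) (Option (Fin N)) ℝ) (σ : ℝ) : Matrix (Fin 2) (Fin 2) ℝ :=
  k none none • (1 : Matrix (Fin 2) (Fin 2) ℝ)
    - (KstarMat k)ᵀ * (Gmat lam)ᵀ * (measurementCov lam k σ)⁻¹ * Gmat lam * KstarMat k

lemma vecMulVec_bearingBar (l : Fin 2 → ℝ) :
    vecMulVec (bearingBar l) (bearingBar l)
      = (2 * (l 0 ^ 2 + l 1 ^ 2)) • 1 - (2 : ℝ) • vecMulVec l l := by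
  have hbar : bearingBar l = √2 • ![l 1, -l 0] := by
    ext i
    fin_cases i <;> simp [bearingBar, Rmat, mulVec, dotProduct]
  rw [hbar, smul_vecMulVec, vecMulVec_smul, smul_smul, Real.mul_self_sqrt zero_le_two]
  ext i j
  fin_cases i <;> fin_cases j <;> simp [vecMulVec_apply] <;> ring

lemma bearingBar_dotProduct_self (l : Fin 2 → ℝ) :
    bearingBar l ⬝ᵥ bearingBar l = 2 * (l 0 ^ 2 + l 1 ^ 2) := by
  rw [← trace_vecMulVec, vecMulVec_bearingBar]
  simp only [trace_sub, trace_smul, trace_one, trace_vecMulVec, dotProduct, Fin.sum_univ_two,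
    Fintype.card_fin, smul_eq_mul, Nat.cast_ofNat]
  ring

lemma cumBearing_eq_transpose_mul (hlam : ∀ i, lam i 0 ^ 2 + lam i 1 ^ 2 = 1) :
    cumBearing lam = (bearingRows lam)ᵀ * bearingRows lam := by
  have hterm (i : Fin N) : (2 : ℝ) • (1 : Matrix (Fin 2) (Fin 2) ℝ)
      - (2 : ℝ) • vecMulVec (lam i) (lam i)
        = vecMulVec (bearingBar (lam i)) (bearingBar (lam i)) := by
    rw [vecMulVec_bearingBar, hlam, mul_one]
  ext a b
  simp [cumBearing, hterm, Matrix.sum_apply, Matrix.mul_apply, bearingRows, vecMulVec_apply]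

lemma trace_cumBearing (hlam : ∀ i, lam i 0 ^ 2 + lam i 1 ^ 2 = 1) :
    (cumBearing lam).trace = 2 * N := by
  rw [cumBearing_eq_transpose_mul hlam, trace_mul_comm]
  calc (bearingRows lam * (bearingRows lam)ᵀ).trace
      = ∑ i, bearingBar (lam i) ⬝ᵥ bearingBar (lam i) := rfl
    _ = 2 * N := by
      simp only [bearingBar_dotProduct_self, hlam, mul_one, Finset.sum_const, Finset.card_univ,
        Fintype.card_fin, nsmul_eq_mul]
      ring

lemma le_iSup_eigenvalues_cumBearing (hlam : ∀ i, lam i 0 ^ 2 + lam i 1 ^ 2 = 1)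
    (hP : (cumBearing lam).IsHermitian) : (N : ℝ) ≤ ⨆ i, hP.eigenvalues i := by
  have htrace := trace_le_card_mul_iSup_eigenvalues hP
  rw [trace_cumBearing hlam, Fintype.card_fin, Nat.cast_ofNat] at htrace
  linarith

lemma Gmat_mul_transpose (hlam : ∀ i, lam i 0 ^ 2 + lam i 1 ^ 2 = 1) :
    Gmat lam * (Gmat lam)ᵀ = (2 : ℝ) • 1 := by
  ext i j
  have hsq : ∑ a, bearingBar (lam i) a * bearingBar (lam i) a = 2 := by
    simpa [hlam] using bearingBar_dotProduct_self (lam i)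
  rcases eq_or_ne i j with rfl | hij
  · simpa [Matrix.mul_apply, Gmat, Fintype.sum_prod_type] using hsq
  · simp [Matrix.mul_apply, Gmat, Fintype.sum_prod_type, hij]

lemma Gmat_mul_Kmat_mul_transpose :
    Gmat lam * Kmat k * (Gmat lam)ᵀ
      = k.submatrix some some ⊙ (bearingRows lam * (bearingRows lam)ᵀ) := by
  ext i j
  simp only [Matrix.mul_apply, Gmat, Kmat, Matrix.one_apply, mul_ite, mul_one, mul_zero, ite_mul,
    zero_mul, Fintype.sum_prod_type, Finset.sum_ite_eq', Finset.sum_ite_eq, Finset.sum_ite_irrel,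
    Finset.sum_const_zero, Finset.mem_univ, ↓reduceIte, Fin.sum_univ_two, transpose_apply,
    bearingRows, hadamard_apply, submatrix_apply, of_apply]
  ring

lemma Gmat_mul_KstarMat :
    Gmat lam * KstarMat k = diagonal (fun i => k (some i) none) * bearingRows lam := by
  ext i a
  simp [Matrix.mul_apply, Gmat, KstarMat, bearingRows, Fintype.sum_prod_type, Matrix.one_apply,
    diagonal_apply, mul_comm]

lemma measurementCov_eq (hlam : ∀ i, lam i 0 ^ 2 + lam i 1 ^ 2 = 1) :
    measurementCov lam k σ
      = k.submatrix some some ⊙ (bearingRows lam * (bearingRows lam)ᵀ) + (2 * σ ^ 2) • 1 := by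
  rw [measurementCov, Matrix.mul_add, Matrix.add_mul, Gmat_mul_Kmat_mul_transpose,
    Matrix.mul_smul, Matrix.mul_one, Matrix.smul_mul, Gmat_mul_transpose hlam, smul_smul,
    mul_comm (σ ^ 2)]

lemma posteriorCov_eq :
    posteriorCov lam k σ = k none none • 1
      - (Gmat lam * KstarMat k)ᴴ * (measurementCov lam k σ)⁻¹ * (Gmat lam * KstarMat k) := by
  simp [posteriorCov, Matrix.mul_assoc]

lemma measurementCov_posDef (hlam : ∀ i, lam i 0 ^ 2 + lam i 1 ^ 2 = 1) (hk : k.PosSemidef)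
    (hσ : 0 < σ) : (measurementCov lam k σ).PosDef := by
  rw [measurementCov_eq hlam]
  exact .posSemidef_add
    ((hk.submatrix some).hadamard (posSemidef_self_mul_conjTranspose (bearingRows lam)))
    (PosDef.one.smul (by positivity))

lemma posSemidef_fromBlocks_Kmat (hk : k.PosSemidef) :
    (fromBlocks (Kmat k) (KstarMat k) (KstarMat k)ᴴ (k none none • 1)).PosSemidef := by
  let e : (Fin N × Fin 2) ⊕ Fin 2 → Option (Fin N) × Fin 2 :=
    Sum.elim (Prod.map some id) (Prod.mk none)
  have hsymm (i : Fin N) : k none (some i) = k (some i) none := hk.1.apply (some i) none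
  have hkron : fromBlocks (Kmat k) (KstarMat k) (KstarMat k)ᴴ (k none none • 1)
      = (k ⊗ₖ (1 : Matrix (Fin 2) (Fin 2) ℝ)).submatrix e e := by
    ext (⟨i, a⟩ | a) (⟨j, b⟩ | b) <;> simp [e, Kmat, KstarMat, hsymm, Matrix.one_apply, eq_comm]
  rw [hkron]
  exact (hk.kronecker .one).submatrix e

lemma posteriorCov_nonneg (hlam : ∀ i, lam i 0 ^ 2 + lam i 1 ^ 2 = 1) (hk : k.PosSemidef)
    (hσ : 0 < σ) : 0 ≤ posteriorCov lam k σ := by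
  have hnoise : (fromBlocks (σ ^ 2 • 1) 0 0 0 :
      Matrix ((Fin N × Fin 2) ⊕ Fin 2) ((Fin N × Fin 2) ⊕ Fin 2) ℝ).PosSemidef := by
    rw [smul_one_eq_diagonal, ← diagonal_zero, fromBlocks_diagonal, posSemidef_diagonal_iff]
    exact Sum.forall.2 ⟨fun _ => sq_nonneg σ, fun _ => le_rfl⟩
  have hjoint : (fromBlocks (Kmat k + σ ^ 2 • 1) (KstarMat k) (KstarMat k)ᴴ
      (k none none • 1)).PosSemidef := by
    simpa [fromBlocks_add] using (posSemidef_fromBlocks_Kmat hk).add hnoise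
  rw [nonneg_iff_posSemidef, posteriorCov_eq]
  exact posSemidef_sub_conjTranspose_mul_inv_mul hjoint (Gmat lam)
    (measurementCov_posDef hlam hk hσ)

lemma measurementCov_le {L κ : ℝ} (hlam : ∀ i, lam i 0 ^ 2 + lam i 1 ^ 2 = 1)
    (hk : k.PosSemidef) (hκ : ∀ i : Fin N, k (some i) (some i) ≤ κ) (hL : 0 < L)
    (hPL : cumBearing lam ≤ L • 1) : measurementCov lam k σ ≤ (κ * L + 2 * σ ^ 2) • 1 := by
  rw [cumBearing_eq_transpose_mul hlam] at hPL
  rw [measurementCov_eq hlam, add_smul]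
  gcongr
  exact hadamard_le_mul_smul_one (hk.submatrix some) hκ hL.le (mul_conjTranspose_le_smul_one hL hPL)

lemma smul_one_le_gram_Gmat_mul_KstarMat {l μ : ℝ} (hlam : ∀ i, lam i 0 ^ 2 + lam i 1 ^ 2 = 1)
    (hμ : 0 ≤ μ) (hkμ : ∀ i : Fin N, μ ≤ k (some i) none ^ 2) (hPl : l • 1 ≤ cumBearing lam) :
    (μ * l) • 1 ≤ (Gmat lam * KstarMat k)ᴴ * (Gmat lam * KstarMat k) :=
  calc (μ * l) • (1 : Matrix (Fin 2) (Fin 2) ℝ) = μ • l • 1 := mul_smul ..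
    _ ≤ μ • cumBearing lam := smul_le_smul_of_nonneg_left hPl hμ
    _ = (bearingRows lam)ᴴ * diagonal (fun _ : Fin N => μ) * bearingRows lam := by
      simp only [cumBearing_eq_transpose_mul hlam, ← smul_one_eq_diagonal, Matrix.mul_smul,
        Matrix.smul_mul, Matrix.mul_one, conjTranspose_eq_transpose_of_trivial]
    _ ≤ (bearingRows lam)ᴴ * diagonal (fun i => k (some i) none ^ 2) * bearingRows lam :=
      conjTranspose_mul_mul_le_conjTranspose_mul_mul (diagonal_le_diagonal hkμ) _
    _ = (Gmat lam * KstarMat k)ᴴ * (Gmat lam * KstarMat k) := by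
      simp only [Gmat_mul_KstarMat, conjTranspose_mul, diagonal_conjTranspose, star_trivial,
        pow_two, ← diagonal_mul_diagonal, Matrix.mul_assoc]

theorem posteriorCov_le {l L κ μ : ℝ} (hlam : ∀ i, lam i 0 ^ 2 + lam i 1 ^ 2 = 1)
    (hk : k.PosSemidef) (hσ : 0 < σ) (hκ : 0 ≤ κ) (hkκ : ∀ i : Fin N, k (some i) (some i) ≤ κ)
    (hμ : 0 ≤ μ) (hkμ : ∀ i : Fin N, μ ≤ k (some i) none ^ 2) (hL : 0 < L)
    (hPl : l • 1 ≤ cumBearing lam) (hPL : cumBearing lam ≤ L • 1) :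
    posteriorCov lam k σ ≤ (k none none - μ * l / (κ * L + 2 * σ ^ 2)) • 1 := by
  set C := κ * L + 2 * σ ^ 2
  set B := Gmat lam * KstarMat k
  have hC : 0 < C := by positivity
  have hinv : C⁻¹ • (1 : Matrix (Fin N) (Fin N) ℝ) ≤ (measurementCov lam k σ)⁻¹ :=
    inv_smul_one_le_inv (measurementCov_posDef hlam hk hσ) hC (measurementCov_le hlam hk hkκ hL hPL)
  rw [posteriorCov_eq, sub_smul]
  gcongr
  calc (μ * l / C) • (1 : Matrix (Fin 2) (Fin 2) ℝ) = C⁻¹ • (μ * l) • 1 := by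
        rw [smul_smul, inv_mul_eq_div]
    _ ≤ C⁻¹ • (Bᴴ * B) := smul_le_smul_of_nonneg_left
      (smul_one_le_gram_Gmat_mul_KstarMat hlam hμ hkμ hPl) (inv_nonneg.2 hC.le)
    _ = Bᴴ * (C⁻¹ • (1 : Matrix (Fin N) (Fin N) ℝ)) * B := by simp
    _ ≤ Bᴴ * (measurementCov lam k σ)⁻¹ * B :=
      conjTranspose_mul_mul_le_conjTranspose_mul_mul hinv B

end Bearing

lemma sub_div_le_add_div {c κ μ l L s n : ℝ} (hκ : 0 < κ) (hμ : 0 ≤ μ) (hμκ : μ ≤ κ * c)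
    (hl : 0 < l) (hlL : l ≤ L) (hn : 0 < n) (hnL : n ≤ L) (hs : 0 ≤ s) :
    c - μ * l / (κ * L + 2 * s) ≤ 2 * c * s / (n * κ) + (c * κ - μ / (L / l)) / κ := by
  have hL : 0 < L := hl.trans_le hlL
  have hκc : 0 ≤ κ * c := hμ.trans hμκ
  have hden : κ * n ≤ κ * L + 2 * s := by
    linarith [mul_le_mul_of_nonneg_left hnL hκ.le]
  have hgap : μ * l / (κ * L) - μ * l / (κ * L + 2 * s) ≤ 2 * c * s / (n * κ) :=
    calc μ * l / (κ * L) - μ * l / (κ * L + 2 * s)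
        = 2 * s * (μ * l) / (κ * L * (κ * L + 2 * s)) := by
          field_simp
          ring
      _ ≤ 2 * s * (κ * c * L) / (κ * L * (κ * n)) := by
          gcongr
      _ = 2 * c * s / (n * κ) := by field_simp
  have hξ : (c * κ - μ / (L / l)) / κ = c - μ * l / (κ * L) := by field_simp
  linarith

theorem posterior_covariance_norm_bound {N : ℕ} (hN : 1 ≤ N)
    (lam : Fin N → Fin 2 → ℝ) (hlam : ∀ i, lam i 0 ^ 2 + lam i 1 ^ 2 = 1)
    (hPd : (cumBearing lam).PosDef)
    (k : Matrix (Option (Fin N)) (Option (Fin N)) ℝ)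
    (hk : k.PosSemidef) (hkd : ∀ i : Fin N, 0 < k (some i) (some i))
    (hkstar : 0 < k none none) (σ : ℝ) (hσ : 0 < σ) :
    specNorm
        (k none none • (1 : Matrix (Fin 2) (Fin 2) ℝ)
          - (KstarMat k)ᵀ * (Gmat lam)ᵀ
            * (Gmat lam * (Kmat k + σ ^ 2 • (1 : Matrix (Fin N × Fin 2) (Fin N × Fin 2) ℝ))
                * (Gmat lam)ᵀ)⁻¹
            * Gmat lam * KstarMat k) ≤
      2 * k none none * σ ^ 2 /
          (N * Finset.univ.sup'
            (Finset.univ_nonempty_iff.mpr (Fin.pos_iff_nonempty.mp hN))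
            (fun i : Fin N => k (some i) (some i)))
        + (k none none * Finset.univ.sup'
              (Finset.univ_nonempty_iff.mpr (Fin.pos_iff_nonempty.mp hN))
              (fun i : Fin N => k (some i) (some i))
            - (Finset.univ.inf'
                (Finset.univ_nonempty_iff.mpr (Fin.pos_iff_nonempty.mp hN))
                (fun i : Fin N => k (some i) none ^ 2)) / condNum hPd.1) /
          Finset.univ.sup'
            (Finset.univ_nonempty_iff.mpr (Fin.pos_iff_nonempty.mp hN))
            (fun i : Fin N => k (some i) (some i)) := by
  have : Nonempty (Fin N) := Fin.pos_iff_nonempty.mp hN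
  set κ := Finset.univ.sup' _ fun i : Fin N => k (some i) (some i)
  set μ := Finset.univ.inf' _ fun i : Fin N => k (some i) none ^ 2
  set l := ⨅ i, hPd.1.eigenvalues i
  set L := ⨆ i, hPd.1.eigenvalues i
  have hkκ (i : Fin N) : k (some i) (some i) ≤ κ :=
    Finset.le_sup' (fun i => k (some i) (some i)) (Finset.mem_univ i)
  have hkμ (i : Fin N) : μ ≤ k (some i) none ^ 2 :=
    Finset.inf'_le (fun i => k (some i) none ^ 2) (Finset.mem_univ i)
  have i₀ : Fin N := ⟨0, hN⟩
  have hκ : 0 < κ := (hkd i₀).trans_le (hkκ i₀)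
  have hμ : 0 ≤ μ := Finset.le_inf' _ _ fun i _ => sq_nonneg _
  have hμκ : μ ≤ κ * k none none :=
    calc μ ≤ k (some i₀) none ^ 2 := hkμ i₀
      _ ≤ k (some i₀) (some i₀) * k none none := sq_apply_le_mul_of_posSemidef hk _ _
      _ ≤ κ * k none none := mul_le_mul_of_nonneg_right (hkκ i₀) hkstar.le
  have hl : 0 < l := iInf_eigenvalues_pos hPd
  have hlL : l ≤ L := ciInf_le_ciSup (Set.finite_range _).bddBelow (Set.finite_range _).bddAbove
  calc specNorm (posteriorCov lam k σ) ≤ k none none - μ * l / (κ * L + 2 * σ ^ 2) :=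
        specNorm_le_of_nonneg_of_le_smul_one (posteriorCov_nonneg hlam hk hσ)
          (posteriorCov_le hlam hk hσ hκ.le hkκ hμ hkμ (hl.trans_le hlL)
            (iInf_eigenvalues_smul_one_le hPd.1) (le_iSup_eigenvalues_smul_one hPd.1))
    _ ≤ _ := sub_div_le_add_div hκ hμ hμκ hl hlL (by exact_mod_cast hN)
        (le_iSup_eigenvalues_cumBearing hlam hPd.1) (sq_nonneg σ)
end
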